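/- Let X be a nonempty finite type, let D_0, D_1 be distributions on X, let ε ∈ (0,1), γ ∈ (0, ε/2) and k ≥ 1. Set D_X := (1−ε)·D_0 + ε·D_1, let g be the associated tilted posterior function, and suppose h : X → [0,1] is γ-calibrated for g under D_X. Set p := E_{D_X}[h] (so p > 0) and D̃_1(z) := h(z)·D_X(z)/p, and define h' : X^k → {0,1} by h'(z_1,…,z_k) = 1 if ∏_{i=1}^k h(z_i) > ε^k and h' = 0 otherwise. Then |E_{D_1^⊗k}[h'] − E_{D_0^⊗k}[h']| ≥ d_TV(D_0^⊗k, D̃_1^⊗k) − (2γ/ε² + γ/ε + 2ε)·k. -/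

import Mathlib

/-- Expectation of `f` under the (finitely supported) distribution `D`. -/
noncomputable def expect {X : Type*} [Fintype X] (D f : X → ℝ) : ℝ := ∑ x, D x * f x

/-- `D` is a probability distribution on the finite type `X`. -/
def IsDist {X : Type*} [Fintype X] (D : X → ℝ) : Prop := (∀ x, 0 ≤ D x) ∧ ∑ x, D x = 1

/-- Total variation distance between two distributions on a finite type. -/
noncomputable def dTV {X : Type*} [Fintype X] (P Q : X → ℝ) : ℝ := (∑ x, |P x - Q x|) / 2

/-- `k`-fold product distribution on `Fin k → X`. -/
noncomputable def prodDist {X : Type*} (k : ℕ) (P : X → ℝ) : (Fin k → X) → ℝ :=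
  fun z => ∏ i, P (z i)


lemma sum_prodDist {X : Type*} [Fintype X] (k : ℕ) (P : X → ℝ) (hP : ∑ x, P x = 1) :
    ∑ z, prodDist k P z = 1 := by
  classical
  unfold prodDist
  have := Finset.prod_univ_sum (fun _ : Fin k => (Finset.univ : Finset X)) (fun _ x => P x)
  rw [Fintype.piFinset_univ] at this
  rw [← this]
  simp [hP]

lemma prodDist_nonneg {X : Type*} (k : ℕ) (P : X → ℝ) (hP : ∀ x, 0 ≤ P x) (z : Fin k → X) :
    0 ≤ prodDist k P z := Finset.prod_nonneg (fun i _ => hP _)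

lemma expect_prodDist_succ {X : Type*} [Fintype X] (k : ℕ) (P : X → ℝ)
    (F : (Fin (k+1) → X) → ℝ) :
    expect (prodDist (k+1) P) F =
      ∑ x, P x * expect (prodDist k P) (fun z => F (Fin.cons x z)) := by
  unfold expect prodDist
  rw [← (Fin.consEquiv (fun _ : Fin (k+1) => X)).sum_comp, Fintype.sum_prod_type]
  refine Finset.sum_congr rfl fun x _ => ?_
  rw [Finset.mul_sum]
  refine Finset.sum_congr rfl fun z _ => ?_
  simp only [Fin.consEquiv, Equiv.coe_fn_mk, Fin.prod_univ_succ, Fin.cons_zero, Fin.cons_succ]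
  ring

lemma expect_mem {X : Type*} [Fintype X] (P : X → ℝ) (hP : IsDist P) (F : X → ℝ)
    (hF : ∀ x, F x ∈ Set.Icc (0:ℝ) 1) : expect P F ∈ Set.Icc (0:ℝ) 1 := by
  refine ⟨Finset.sum_nonneg fun x _ => mul_nonneg (hP.1 x) (hF x).1, ?_⟩
  rw [← hP.2]
  exact Finset.sum_le_sum fun x _ => mul_le_of_le_one_right (hP.1 x) (hF x).2

lemma isDist_prodDist {X : Type*} [Fintype X] (k : ℕ) (P : X → ℝ) (hP : IsDist P) :
    IsDist (prodDist k P) := ⟨prodDist_nonneg k P hP.1, sum_prodDist k P hP.2⟩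

lemma hybrid {X Y : Type*} [Fintype X] (P Q : X → ℝ) (hP : IsDist P) (hQ : IsDist Q)
    (u : X → Y) (δ : ℝ)
    (H : ∀ w : Y → ℝ, (∀ t, w t ∈ Set.Icc (0:ℝ) 1) →
      |expect P (fun x => w (u x)) - expect Q (fun x => w (u x))| ≤ δ) (k : ℕ) :
    ∀ φ : (Fin k → Y) → ℝ, (∀ t, φ t ∈ Set.Icc (0:ℝ) 1) →
      |expect (prodDist k P) (fun z => φ (fun i => u (z i)))
        - expect (prodDist k Q) (fun z => φ (fun i => u (z i)))| ≤ k * δ := by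
  induction k with
  | zero => 
    intro φ hφ
    simp [expect, prodDist]
  | succ k ih =>
    intro φ hφ
    rw [expect_prodDist_succ, expect_prodDist_succ]
    have e : ∀ (x : X) (z : Fin k → X), (fun i => u ((Fin.cons x z : Fin (k+1) → X) i))
        = (Fin.cons (u x) (fun i => u (z i)) : Fin (k+1) → Y) := by
      intro x z
      funext i
      refine Fin.cases ?_ (fun j => ?_) i <;> simp
    simp only [e]
    set A : Y → ℝ := fun t => expect (prodDist k P)
      (fun z => φ (Fin.cons t (fun i => u (z i)))) with hA
    set B : Y → ℝ := fun t => expect (prodDist k Q)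
      (fun z => φ (Fin.cons t (fun i => u (z i)))) with hB
    have h1 : ∀ t, |A t - B t| ≤ k * δ := fun t => ih (fun s => φ (Fin.cons t s)) (fun s => hφ _)
    have h2 := H B (fun t => expect_mem _ (isDist_prodDist k Q hQ) _ (fun z => hφ _))
    have h3 : |∑ x, P x * (A (u x) - B (u x))| ≤ k * δ := by
      calc |∑ x, P x * (A (u x) - B (u x))| ≤ ∑ x, |P x * (A (u x) - B (u x))| :=
            Finset.abs_sum_le_sum_abs _ _
        _ ≤ ∑ x, P x * (k * δ) := by
            refine Finset.sum_le_sum fun x _ => ?_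
            rw [abs_mul, abs_of_nonneg (hP.1 x)]
            exact mul_le_mul_of_nonneg_left (h1 _) (hP.1 x)
        _ = k * δ := by rw [← Finset.sum_mul, hP.2, one_mul]
    have h4 : ∑ x, P x * A (u x) - ∑ x, Q x * B (u x)
        = ∑ x, P x * (A (u x) - B (u x)) +
          (expect P (fun x => B (u x)) - expect Q (fun x => B (u x))) := by
      unfold expect
      simp only [mul_sub, Finset.sum_sub_distrib]
      ring
    change |∑ x, P x * A (u x) - ∑ x, Q x * B (u x)| ≤ _
    rw [h4]
    refine (abs_add_le _ _).trans ?_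
    push_cast
    linarith

lemma bern (a b γ : ℝ) (k : ℕ) (ha : 0 < a) (hab : a ≤ b) (hd : b - a ≤ γ) :
    1 - (a / b) ^ k ≤ k * (γ / b) := by
  have hb : 0 < b := ha.trans_le hab
  have h0 : 0 ≤ a / b := by positivity
  have := one_add_mul_le_pow (a := a / b - 1) (by linarith) k
  have e : 1 + (a / b - 1) = a / b := by ring
  rw [e] at this
  have h1 : 1 - a / b ≤ γ / b := by
    rw [one_sub_div hb.ne']
    gcongr
  have := mul_le_mul_of_nonneg_left h1 (Nat.cast_nonneg (α := ℝ) k)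
  linarith

lemma dTV_eq {X : Type*} [Fintype X] (P Q : X → ℝ) (hP : IsDist P) (hQ : IsDist Q) :
    dTV P Q = expect Q (fun x => if P x ≤ Q x then 1 else 0)
      - expect P (fun x => if P x ≤ Q x then 1 else 0) := by
  unfold dTV expect
  have h0 : ∑ x, (Q x - P x) = 0 := by rw [Finset.sum_sub_distrib, hP.2, hQ.2, sub_self]
  have : ∑ x, |P x - Q x| = ∑ x, (2 * (Q x * (if P x ≤ Q x then 1 else 0)
      - P x * (if P x ≤ Q x then 1 else 0)) - (Q x - P x)) := by
    refine Finset.sum_congr rfl fun x _ => ?_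
    split_ifs with hx
    · rw [abs_of_nonpos (by linarith)]; ring
    · rw [abs_of_nonneg (by linarith)]; ring
  rw [this, Finset.sum_sub_distrib, h0, ← Finset.mul_sum, Finset.sum_sub_distrib]
  ring

lemma pointwise_hi (a q e P η F : ℝ) (hP : 0 < P) (hq : 0 ≤ q)
    (heP : e ≤ P) (hη : 1 - e / P ≤ η) (h0 : 0 ≤ F) (h1 : F ≤ 1) :
    (a / P * q - q) * F ≤ (a / P * q - q) * (if a > e then 1 else 0) + η * q := by
  have hη0 : 0 ≤ η := by
    have : e / P ≤ 1 := (div_le_one hP).2 heP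
    linarith
  split_ifs with hc
  · have : e / P ≤ a / P := by gcongr
    have : 0 ≤ (a / P - 1 + η) * q := mul_nonneg (by linarith) hq
    have h3 : 0 ≤ η * q := mul_nonneg hη0 hq
    rcases le_total 0 (a / P * q - q) with h | h
    · have := mul_le_of_le_one_right h h1
      linarith
    · have := mul_nonneg_of_nonpos_of_nonpos h (sub_nonpos.2 h1)
      nlinarith
  · have : a / P ≤ 1 := (div_le_one hP).2 (by linarith)
    have h2 : a / P * q - q ≤ 0 := by nlinarith
    have := mul_nonpos_of_nonpos_of_nonneg h2 h0
    have h3 : 0 ≤ η * q := mul_nonneg hη0 hq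
    linarith

lemma pointwise_lo (a q e P η F : ℝ) (ha : 0 ≤ a) (hP : 0 < P) (hq : 0 ≤ q)
    (heP : P ≤ e) (hη : 1 - P / e ≤ η) (h0 : 0 ≤ F) (h1 : F ≤ 1) :
    (a / P * q - q) * F ≤ (a / P * q - q) * (if a > e then 1 else 0) + η * (a / P * q) := by
  have he : 0 < e := hP.trans_le heP
  have hη0 : 0 ≤ η := by
    have : P / e ≤ 1 := (div_le_one he).2 heP
    linarith
  have h3 : 0 ≤ η * (a / P * q) := by positivity
  split_ifs with hc
  · have : 1 ≤ a / P := (one_le_div hP).2 (by linarith)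
    have h : 0 ≤ a / P * q - q := by nlinarith
    have := mul_le_of_le_one_right h h1
    linarith
  · have h4 : P / e * (a / P) ≤ 1 := by
      rw [show P / e * (a / P) = a / e by field_simp]
      exact (div_le_one he).2 (by linarith)
    have h5 : (1 - P / e) * (a / P) ≤ η * (a / P) :=
      mul_le_mul_of_nonneg_right hη (by positivity)
    have h6 : (a / P - 1) * q ≤ η * (a / P) * q :=
      mul_le_mul_of_nonneg_right (by linarith) hq
    rcases le_total 0 (a / P * q - q) with h | h
    · have := mul_le_of_le_one_right h h1
      linarith
    · have := mul_nonpos_of_nonpos_of_nonneg h h0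
      linarith

theorem stmt_3 {X : Type*} [Fintype X] [Nonempty X]
    (D0 D1 : X → ℝ) (hD0 : IsDist D0) (hD1 : IsDist D1)
    (ε γ : ℝ) (hε : ε ∈ Set.Ioo (0:ℝ) 1) (hγ : γ ∈ Set.Ioo (0:ℝ) (ε/2))
    (k : ℕ) (hk : 1 ≤ k)
    (DX : X → ℝ) (hDX : DX = fun x => (1 - ε) * D0 x + ε * D1 x)
    (g : X → ℝ)
    (hg : g = fun x => if 0 < DX x then ε * D1 x / DX x else 0)
    (h : X → ℝ) (hh : ∀ x, h x ∈ Set.Icc (0:ℝ) 1)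
    (hcal : ∀ w : ℝ → ℝ, (∀ t, w t ∈ Set.Icc (0:ℝ) 1) →
      |expect DX (fun x => w (h x) * (g x - h x))| ≤ γ)
    (p : ℝ) (hp : p = expect DX h)
    (Dt1 : X → ℝ) (hDt1 : Dt1 = fun z => h z * DX z / p)
    (h' : (Fin k → X) → ℝ)
    (hh' : h' = fun z => if (∏ i, h (z i)) > ε ^ k then 1 else 0) :
    0 < p ∧
    |expect (prodDist k D1) h' - expect (prodDist k D0) h'| ≥
      dTV (prodDist k D0) (prodDist k Dt1) - (2 * γ / ε ^ 2 + γ / ε + 2 * ε) * k := by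
  classical
  obtain ⟨hε0, hε1⟩ := hε
  obtain ⟨hγ0, hγ1⟩ := hγ
  have hDXd : IsDist DX := by
    subst hDX
    refine ⟨fun x => add_nonneg (mul_nonneg (by linarith) (hD0.1 x))
      (mul_nonneg hε0.le (hD1.1 x)), ?_⟩
    rw [Finset.sum_add_distrib, ← Finset.mul_sum, ← Finset.mul_sum, hD0.2, hD1.2]
    ring
  have hgD : ∀ x, DX x * g x = ε * D1 x := by
    intro x
    rw [hg]
    dsimp only
    split_ifs with hx
    · field_simp
    · have h1 : DX x = (1 - ε) * D0 x + ε * D1 x := by rw [hDX]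
      have h2 := mul_nonneg (sub_nonneg.2 hε1.le) (hD0.1 x)
      have h3 := mul_nonneg hε0.le (hD1.1 x)
      linarith
  have hcal' : ∀ w : ℝ → ℝ, (∀ t, w t ∈ Set.Icc (0:ℝ) 1) →
      |ε * expect D1 (fun x => w (h x)) - ∑ x, DX x * h x * w (h x)| ≤ γ := by
    intro w hw
    have e : expect DX (fun x => w (h x) * (g x - h x))
        = ε * expect D1 (fun x => w (h x)) - ∑ x, DX x * h x * w (h x) := by
      unfold expect
      rw [Finset.mul_sum, ← Finset.sum_sub_distrib]
      refine Finset.sum_congr rfl fun x _ => ?_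
      linear_combination w (h x) * hgD x
    rw [← e]
    exact hcal w hw
  have hpe : |ε - p| ≤ γ := by
    have := hcal' (fun _ => 1) (fun _ => by simp)
    simpa [expect, hD1.2, hp] using this
  have hpe' := abs_le.1 hpe
  have hp0 : 0 < p := by linarith
  refine ⟨hp0, ?_⟩
  have hDt : IsDist Dt1 := by
    subst hDt1
    refine ⟨fun x => div_nonneg (mul_nonneg (hh x).1 (hDXd.1 x)) hp0.le, ?_⟩
    rw [← Finset.sum_div, div_eq_one_iff_eq hp0.ne', hp]
    exact Finset.sum_congr rfl fun x _ => mul_comm _ _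
  -- one-step bound for D1 against Dt1
  have hstep : ∀ w : ℝ → ℝ, (∀ t, w t ∈ Set.Icc (0:ℝ) 1) →
      |expect D1 (fun x => w (h x)) - expect Dt1 (fun x => w (h x))| ≤ 2 * γ / ε := by
    intro w hw
    have h1 := hcal' w hw
    have h2 : ∑ x, DX x * h x * w (h x) = p * expect Dt1 (fun x => w (h x)) := by
      unfold expect
      rw [Finset.mul_sum, hDt1]
      refine Finset.sum_congr rfl fun x _ => ?_
      field_simp
    rw [h2] at h1
    have h3 := expect_mem Dt1 hDt (fun x => w (h x)) (fun x => hw _)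
    generalize expect Dt1 (fun x => w (h x)) = T at *
    generalize expect D1 (fun x => w (h x)) = S at *
    rw [le_div_iff₀ hε0]
    have h4 : |S - T| * ε = |(ε * S - p * T) + (p - ε) * T| := by
      rw [show (ε * S - p * T) + (p - ε) * T = (S - T) * ε by ring, abs_mul, abs_of_pos hε0]
    rw [h4]
    refine (abs_add_le _ _).trans ?_
    have h5 : |(p - ε) * T| ≤ γ := by
      rw [abs_mul, abs_of_nonneg h3.1, abs_sub_comm]
      exact (mul_le_of_le_one_right (abs_nonneg _) h3.2).trans hpe
    linarith
  have hstep0 : ∀ w : X → ℝ, (∀ t, w t ∈ Set.Icc (0:ℝ) 1) →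
      |expect DX (fun x => w (id x)) - expect D0 (fun x => w (id x))| ≤ ε := by
    intro w hw
    have h1 := expect_mem D0 hD0 w hw
    have h2 := expect_mem D1 hD1 w hw
    have e : expect DX w - expect D0 w = ε * (expect D1 w - expect D0 w) := by
      unfold expect
      rw [← Finset.sum_sub_distrib, ← Finset.sum_sub_distrib, Finset.mul_sum, hDX]
      refine Finset.sum_congr rfl fun x _ => ?_
      ring
    change |expect DX w - expect D0 w| ≤ ε
    rw [e, abs_mul, abs_of_pos hε0]
    refine mul_le_of_le_one_right hε0.le (abs_le.2 ⟨?_, ?_⟩) <;> linarith [h1.1, h1.2, h2.1, h2.2]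
  have hh'01 : ∀ z, h' z ∈ Set.Icc (0:ℝ) 1 := by
    intro z
    rw [hh']
    dsimp only
    split_ifs <;> simp
  have b1 : |expect (prodDist k D1) h' - expect (prodDist k Dt1) h'| ≤ k * (2 * γ / ε) := by
    have := hybrid D1 Dt1 hD1 hDt h _ hstep k (fun t => if (∏ i, t i) > ε ^ k then 1 else 0)
      (fun t => by split_ifs <;> simp)
    rw [hh']
    exact this
  have b2 : |expect (prodDist k DX) h' - expect (prodDist k D0) h'| ≤ k * ε :=
    hybrid DX D0 hDXd hD0 id _ hstep0 k h' hh'01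
  set F : (Fin k → X) → ℝ := fun z => if prodDist k D0 z ≤ prodDist k Dt1 z then 1 else 0 with hF
  have hF01 : ∀ z, F z ∈ Set.Icc (0:ℝ) 1 := by
    intro z
    rw [hF]
    dsimp only
    split_ifs <;> simp
  have b3 : |expect (prodDist k DX) F - expect (prodDist k D0) F| ≤ k * ε :=
    hybrid DX D0 hDXd hD0 id _ hstep0 k F hF01
  have b4 : dTV (prodDist k D0) (prodDist k Dt1)
      = expect (prodDist k Dt1) F - expect (prodDist k D0) F :=
    dTV_eq _ _ (isDist_prodDist k _ hD0) (isDist_prodDist k _ hDt)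
  have hDtk : ∀ z, prodDist k Dt1 z = (∏ i, h (z i)) / p ^ k * prodDist k DX z := by
    intro z
    rw [hDt1]
    unfold prodDist
    rw [Finset.prod_div_distrib, Finset.prod_mul_distrib]
    simp
    ring
  have hQ := isDist_prodDist k _ hDXd
  have hT := isDist_prodDist k _ hDt
  have key : ∀ R : (Fin k → X) → ℝ, IsDist R →
      (∀ z, (prodDist k Dt1 z - prodDist k DX z) * F z ≤
        (prodDist k Dt1 z - prodDist k DX z) * h' z + k * (γ / ε) * R z) →
      expect (prodDist k Dt1) F - expect (prodDist k DX) F ≤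
        expect (prodDist k Dt1) h' - expect (prodDist k DX) h' + k * (γ / ε) := by
    intro R hR H
    have := Finset.sum_le_sum (s := Finset.univ) fun z _ => H z
    rw [Finset.sum_add_distrib, ← Finset.mul_sum, hR.2, mul_one] at this
    simp only [sub_mul, Finset.sum_sub_distrib] at this
    exact this
  have b5 : expect (prodDist k Dt1) F - expect (prodDist k DX) F ≤
        expect (prodDist k Dt1) h' - expect (prodDist k DX) h' + k * (γ / ε) := by
    rcases le_total ε p with hc | hc
    · refine key _ hQ fun z => ?_
      rw [hDtk, hh']
      refine pointwise_hi _ _ _ _ _ _ (by positivity) (hQ.1 z) (by gcongr) ?_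
        (hF01 z).1 (hF01 z).2
      rw [← div_pow]
      refine (bern ε p γ k hε0 hc (by linarith)).trans ?_
      gcongr
    · refine key _ hT fun z => ?_
      rw [hDtk, hh']
      refine pointwise_lo _ _ _ _ _ _ (Finset.prod_nonneg fun i _ => (hh _).1) (by positivity)
        (hQ.1 z) (by gcongr) ?_ (hF01 z).1 (hF01 z).2
      rw [← div_pow]
      exact bern p ε γ k hp0 hc (by linarith)
  have b6 : γ / ε ≤ γ / ε ^ 2 := by
    apply div_le_div_of_nonneg_left hγ0.le (by positivity)
    nlinarith
  have b7 : (k:ℝ) * (γ / ε) ≤ k * (γ / ε ^ 2) := by gcongr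
  have b8 := le_abs_self (expect (prodDist k D1) h' - expect (prodDist k D0) h')
  have c1 := (abs_le.1 b1).1
  have c2 := (abs_le.1 b2).1
  have c3 := (abs_le.1 b3).2
  have e1 : (2 * γ / ε ^ 2 + γ / ε + 2 * ε) * k
      = 2 * (k * (γ / ε ^ 2)) + k * (γ / ε) + 2 * (k * ε) := by ring
  have e2 : (k:ℝ) * (2 * γ / ε) = 2 * (k * (γ / ε)) := by ring
  rw [e2] at c1
  rw [b4, e1]
  linarith
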